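/- arXiv:1403.4137 — 7 statements merged into one kernel-verified Lean document; each statement's English description precedes it below -/
import Mathlib

section
/- Let p be a prime, m a natural number, and let q ≥ 1, k, t be natural numbers with 0 ≤ k < t < p^m. Then the level-m partial binomial ⦃p^m·q + k, t⦄ is congruent to 0 modulo p, i.e. the p-adic norm of the rational number ⦃p^m·q + k, t⦄ is at most 1/p. (Equivalently, since ⟨p^m·q + k, t⟩ = q in this range, the p-adic valuation of the binomial coefficient C(p^m·q + k, t) is at least padicValNat p q + 1.) -/
/-- `mAngle p m k k'` is the number `⟨k, k'⟩ = q!/(q'!·q''!)` where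
`q = ⌊k/p^m⌋`, `q' = ⌊k'/p^m⌋` and `q'' = ⌊(k-k')/p^m⌋`. -/
def mAngle (p m k k' : ℕ) : ℚ :=
  (Nat.factorial (k / p ^ m) : ℚ) /
    ((Nat.factorial (k' / p ^ m) : ℚ) * (Nat.factorial ((k - k') / p ^ m) : ℚ))

/-- `mPartialBinom p m k k'` is the level-`m` partial binomial
`⦃k, k'⦄ = C(k, k') / ⟨k, k'⟩`. -/
def mPartialBinom (p m k k' : ℕ) : ℚ :=
  (Nat.choose k k' : ℚ) / mAngle p m k k'

/-- `mGamma p m a b c` is the number `Γ(a,b,c) = ⦃a+b+c, a⦄·⦃b+c, b⦄·⟨a+b, a⟩·⟨a+c, a⟩`. -/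
def mGamma (p m a b c : ℕ) : ℚ :=
  mPartialBinom p m (a + b + c) a * mPartialBinom p m (b + c) b *
    mAngle p m (a + b) a * mAngle p m (a + c) a

/-! By Legendre's formula, `n! / ⌊n / p ^ m⌋!` has `p`-adic valuation `∑ i ∈ [1, m], ⌊n / p ^ i⌋`:
dividing by `⌊n / p ^ m⌋!` truncates Legendre's sum. Since `⦃a + b, a⦄` is a quotient of such
partial factorials, Kummer's theorem truncates in the same way: the valuation of `⦃a + b, a⦄` is the
number of carries into the positions `1, …, m` when `a` and `b` are added in base `p`. There is a
carry into position `m` as soon as `(a + b) mod p ^ m < a mod p ^ m`, which is the condition `k < t`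
when `a = t < p ^ m` and `a + b = p ^ m * q + k`. -/

/-- The level-`m` partial factorial `n! / ⌊n / p ^ m⌋!`. The level-`m` partial binomials are to it
what the binomial coefficients are to the factorial. -/
def partialFactorial (p m n : ℕ) : ℚ :=
  (n.factorial : ℚ) / ((n / p ^ m).factorial : ℚ)

theorem partialFactorial_ne_zero (p m n : ℕ) : partialFactorial p m n ≠ 0 :=
  div_ne_zero (mod_cast n.factorial_ne_zero) (mod_cast (n / p ^ m).factorial_ne_zero)

theorem mPartialBinom_add_left (p m a b : ℕ) :
    mPartialBinom p m (a + b) a =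
      partialFactorial p m (a + b) / (partialFactorial p m a * partialFactorial p m b) := by
  rw [mPartialBinom, mAngle, Nat.cast_add_choose, Nat.add_sub_cancel_left]
  simp only [partialFactorial]
  have hfact (n : ℕ) : (n.factorial : ℚ) ≠ 0 := mod_cast n.factorial_ne_zero
  field_simp [hfact]

theorem mPartialBinom_ne_zero (p m : ℕ) {n k : ℕ} (hk : k ≤ n) : mPartialBinom p m n k ≠ 0 := by
  obtain ⟨b, rfl⟩ := Nat.exists_eq_add_of_le hk
  rw [mPartialBinom_add_left]
  exact div_ne_zero (partialFactorial_ne_zero p m _)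
    (mul_ne_zero (partialFactorial_ne_zero p m _) (partialFactorial_ne_zero p m _))

section Valuation

variable (p : ℕ) [Fact p.Prime]

theorem padicValNat_factorial_eq_add_div (n : ℕ) :
    padicValNat p n.factorial = padicValNat p (n / p).factorial + n / p := by
  rw [← padicValNat_mul_div_factorial, padicValNat_factorial_mul]

theorem padicValNat_factorial_eq_add_sum_div (m n : ℕ) :
    padicValNat p n.factorial =
      padicValNat p (n / p ^ m).factorial + ∑ i ∈ Finset.Icc 1 m, n / p ^ i := by
  induction m with
  | zero => simp
  | succ m ih =>
    rw [ih, padicValNat_factorial_eq_add_div, Nat.div_div_eq_div_mul, ← pow_succ,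
      Finset.sum_Icc_succ_top (by lia)]
    ring

theorem padicValRat_partialFactorial (m n : ℕ) :
    padicValRat p (partialFactorial p m n) = ∑ i ∈ Finset.Icc 1 m, ((n / p ^ i : ℕ) : ℤ) := by
  rw [partialFactorial, padicValRat.div (mod_cast n.factorial_ne_zero)
      (mod_cast (n / p ^ m).factorial_ne_zero), padicValRat.of_nat, padicValRat.of_nat,
    padicValNat_factorial_eq_add_sum_div p m n]
  push_cast
  ring

theorem padicValRat_mPartialBinom_add_left (m a b : ℕ) :
    padicValRat p (mPartialBinom p m (a + b) a) =
      ({i ∈ Finset.Icc 1 m | p ^ i ≤ a % p ^ i + b % p ^ i}.card : ℤ) := by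
  have hp : 0 < p := (Fact.out : p.Prime).pos
  have hf := partialFactorial_ne_zero p m
  rw [mPartialBinom_add_left, padicValRat.div (hf _) (mul_ne_zero (hf _) (hf _)),
    padicValRat.mul (hf _) (hf _)]
  simp only [padicValRat_partialFactorial, ← Finset.sum_add_distrib, ← Finset.sum_sub_distrib,
    Finset.card_filter, Nat.cast_sum]
  refine Finset.sum_congr rfl fun i _ => ?_
  rw [Nat.add_div (pow_pos hp i)]
  push_cast
  ring

theorem padicNorm_le_one_div_of_one_le_padicValRat {x : ℚ} (hx : x ≠ 0)
    (hv : 1 ≤ padicValRat p x) : padicNorm p x ≤ 1 / p := by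
  have hp : (1 : ℚ) ≤ p := mod_cast (Fact.out : p.Prime).one_le
  rw [padicNorm.eq_zpow_of_nonzero hx, one_div, ← zpow_neg_one]
  exact zpow_le_zpow_right₀ hp (neg_le_neg hv)

end Valuation

theorem le_mod_add_mod_of_add_mod_lt {a b c : ℕ} (h : (a + b) % c < a % c) :
    c ≤ a % c + b % c := by
  by_contra! hlt
  rw [Nat.add_mod_of_add_mod_lt hlt] at h
  lia

theorem partialBinom_zero_mod_p_general (p m n t : ℕ) (hp : p.Prime) (htn : t ≤ n)
    (hmod : n % p ^ m < t % p ^ m) :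
    padicNorm p (mPartialBinom p m n t) ≤ 1 / p := by
  have : Fact p.Prime := ⟨hp⟩
  have hm : 1 ≤ m := Nat.one_le_iff_ne_zero.2 fun h => by simp [h, Nat.mod_one] at hmod
  refine padicNorm_le_one_div_of_one_le_padicValRat p (mPartialBinom_ne_zero p m htn) ?_
  obtain ⟨s, rfl⟩ := Nat.exists_eq_add_of_le htn
  rw [padicValRat_mPartialBinom_add_left, Nat.one_le_cast, Nat.one_le_iff_ne_zero,
    Finset.card_ne_zero]
  exact ⟨m, Finset.mem_filter.2
    ⟨Finset.mem_Icc.2 ⟨hm, le_rfl⟩, le_mod_add_mod_of_add_mod_lt hmod⟩⟩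

theorem partialBinom_zero_mod_p (p m q k t : ℕ) (hp : p.Prime) (hq : 1 ≤ q)
    (hkt : k < t) (ht : t < p ^ m) :
    padicNorm p (mPartialBinom p m (p ^ m * q + k) t) ≤ 1 / p := by
  have htn : t ≤ p ^ m * q + k := (ht.le.trans (Nat.le_mul_of_pos_right _ hq)).trans le_self_add
  exact partialBinom_zero_mod_p_general p m _ t hp htn <| by
    rwa [Nat.mul_add_mod, Nat.mod_eq_of_lt (hkt.trans ht), Nat.mod_eq_of_lt ht]
end

section
/- Let p be a prime, m a natural number, and let q ≥ 1 and k be natural numbers with 0 ≤ k < p^m. Then the level-m partial binomial ⦃p^m·q + k, p^m⦄ is congruent to 1 modulo p, i.e. the p-adic norm of the rational number C(p^m·q + k, p^m)/q − 1 is at most 1/p (note ⟨p^m·q + k, p^m⟩ = q in this range). -/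
/-!
Write `n = qN + r` with `0 ≤ r < N = p ^ m`. Then `n! = q! · N! ^ q · r! · B(n)`, where `B(n)`
counts the partitions of an `n`-set into `q` unlabelled blocks of size `N` and a remainder. This
`B(n)` is a product of binomial coefficients, each congruent to `1` modulo `p` by Lucas's theorem.
Substituting this into `C(a + b, a)`, the factors `q!` are exactly those of `⟨a + b, a⟩`, and the
powers of `N!` cancel up to a possible carry. The sum of the remainders `a % N + b % N` has the same
carry, so up to factors congruent to `1` the partial binomial `⦃a + b, a⦄` is
`C(a % N + b % N, a % N)`, which is `C((a + b) % N, a % N)` modulo `p`, again by Lucas's theorem.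
-/

section Factorization

open scoped Nat

/-- The number of ways to partition an `n`-element set into `⌊n / N⌋` unlabelled blocks of size `N`
and one remainder of size `n % N`, obtained by choosing the remainder first. It is the cofactor of
`⌊n / N⌋!`, a power of `N!` and `(n % N)!` in `n!`. -/
def blockPartitionCount (N n : ℕ) : ℕ :=
  n.choose (n % N) * (n / N).uniformBell N

theorem factorial_eq_mul_blockPartitionCount (N n : ℕ) :
    n ! = (n / N)! * N ! ^ (n / N) * (n % N)! * blockPartitionCount N n := by
  rcases eq_or_ne N 0 with rfl | hN
  · simp [blockPartitionCount, Nat.uniformBell_zero_left]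
  have hsub : n - n % N = n / N * N := by
    rw [← Nat.mul_div_self_eq_mod_sub_self, mul_comm]
  rw [← Nat.choose_mul_factorial_mul_factorial (Nat.mod_le n N), hsub,
    ← Nat.uniformBell_mul_eq _ hN, blockPartitionCount]
  ring

theorem factorial_add_mod_div_eq_one (N a b : ℕ) : ((a % N + b % N) / N)! = 1 := by
  rcases N.eq_zero_or_pos with rfl | hN
  · simp
  have hcarry : (a % N + b % N) / N < 2 := by
    have := Nat.mod_lt a hN
    have := Nat.mod_lt b hN
    rw [Nat.div_lt_iff_lt_mul hN]
    omega
  exact Nat.factorial_eq_one.mpr (Nat.lt_succ_iff.mp hcarry)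

theorem add_div_eq_div_add_div_add_mod_add_mod_div (N a b : ℕ) :
    (a + b) / N = a / N + b / N + (a % N + b % N) / N := by
  rcases N.eq_zero_or_pos with rfl | hN
  · simp
  have hsplit : a + b = a % N + b % N + N * (a / N + b / N) := by
    linarith [Nat.mod_add_div a N, Nat.mod_add_div b N]
  conv_lhs => rw [hsplit, Nat.add_mul_div_left _ _ hN]
  ring

theorem factorial_add_mul_blockPartitionCount (N a b : ℕ) :
    (a + b)! * blockPartitionCount N (a % N + b % N) =
      ((a + b) / N)! * N ! ^ (a / N + b / N) * (a % N + b % N)! *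
        blockPartitionCount N (a + b) := by
  have hsum := factorial_eq_mul_blockPartitionCount N (a + b)
  have hrem := factorial_eq_mul_blockPartitionCount N (a % N + b % N)
  have hpow : N ! ^ ((a + b) / N) = N ! ^ (a / N + b / N) * N ! ^ ((a % N + b % N) / N) := by
    rw [add_div_eq_div_add_div_add_mod_add_mod_div, pow_add]
  rw [factorial_add_mod_div_eq_one, one_mul, ← Nat.add_mod] at hrem
  rw [hsum, hrem, hpow]
  ring

theorem add_choose_mul_blockPartitionCount (N a b : ℕ) :
    (a + b).choose a * ((a / N)! * (b / N)!) *
        (blockPartitionCount N a * blockPartitionCount N b *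
          blockPartitionCount N (a % N + b % N)) =
      ((a + b) / N)! *
        ((a % N + b % N).choose (a % N) * blockPartitionCount N (a + b)) := by
  have factorial_add (i j : ℕ) : (i + j)! = (i + j).choose i * i ! * j ! := by
    rw [Nat.choose_symm_add, Nat.add_choose_mul_factorial_mul_factorial]
  have ha := factorial_eq_mul_blockPartitionCount N a
  have hb := factorial_eq_mul_blockPartitionCount N b
  have hab := factorial_add_mul_blockPartitionCount N a b
  rw [factorial_add a b, factorial_add (a % N) (b % N), ha, hb] at hab
  have hscale : 0 < N ! ^ (a / N + b / N) * ((a % N)! * (b % N)!) := by positivity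
  apply Nat.eq_of_mul_eq_mul_right hscale
  linear_combination hab

end Factorization

section Congruence

variable {p : ℕ} [Fact p.Prime]

theorem choose_modEq_choose_mod_pow_mul_choose_div_pow (m n k : ℕ) :
    n.choose k ≡
      (n % p ^ m).choose (k % p ^ m) * (n / p ^ m).choose (k / p ^ m) [MOD p] := by
  have hpos : 0 < p ^ m := pow_pos (Fact.out : p.Prime).pos m
  have digit_mod_pow : ∀ i ∈ Finset.range m, ∀ l, l % p ^ m / p ^ i % p = l / p ^ i % p := by
    intro i hi l
    rw [← Nat.mod_mul_right_div_self, ← Nat.mod_mul_right_div_self, ← pow_succ,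
      Nat.mod_mod_of_dvd l (pow_dvd_pow p (Finset.mem_range.mp hi))]
  have hremainder := Choose.choose_modEq_prod_range_choose (p := p)
    (Nat.mod_lt n hpos) (Nat.mod_lt k hpos)
  rw [Finset.prod_congr rfl fun i hi => by rw [digit_mod_pow i hi, digit_mod_pow i hi]]
    at hremainder
  rw [← Int.natCast_modEq_iff, Nat.cast_mul, mul_comm]
  refine (Choose.choose_modEq_choose_mul_prod_range_choose m).trans ?_
  rw [Nat.cast_prod]
  exact hremainder.symm.mul_left _

theorem choose_modEq_choose_mod_pow_of_lt {m k : ℕ} (n : ℕ) (hk : k < p ^ m) :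
    n.choose k ≡ (n % p ^ m).choose k [MOD p] := by
  simpa only [Nat.mod_eq_of_lt hk, Nat.div_eq_of_lt hk, Nat.choose_zero_right, mul_one] using
    choose_modEq_choose_mod_pow_mul_choose_div_pow (p := p) m n k

theorem uniformBell_pow_modEq_one (m q : ℕ) : q.uniformBell (p ^ m) ≡ 1 [MOD p] := by
  have hpos : 0 < p ^ m := pow_pos (Fact.out : p.Prime).pos m
  induction q with
  | zero => rw [Nat.uniformBell_zero_left]
  | succ q ih =>
    have hmod : (q * p ^ m + p ^ m - 1) % p ^ m = p ^ m - 1 := by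
      rw [Nat.add_sub_assoc hpos, Nat.mul_add_mod', Nat.mod_eq_of_lt (Nat.sub_one_lt_of_lt hpos)]
    have hchoose := choose_modEq_choose_mod_pow_of_lt (q * p ^ m + p ^ m - 1)
      (Nat.sub_one_lt_of_lt hpos)
    rw [hmod, Nat.choose_self] at hchoose
    rw [Nat.uniformBell_succ_left]
    exact hchoose.mul ih

theorem blockPartitionCount_pow_modEq_one (m n : ℕ) :
    blockPartitionCount (p ^ m) n ≡ 1 [MOD p] := by
  have hchoose := choose_modEq_choose_mod_pow_of_lt n
    (Nat.mod_lt n (pow_pos (Fact.out : p.Prime).pos m))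
  rw [Nat.choose_self] at hchoose
  exact hchoose.mul (uniformBell_pow_modEq_one m _)

theorem padicNorm_natCast_sub_natCast_le {a b : ℕ} (h : a ≡ b [MOD p]) :
    padicNorm p ((a : ℚ) - b) ≤ 1 / p := by
  have hdvd : ((p ^ 1 : ℕ) : ℤ) ∣ (a : ℤ) - b := by
    simpa only [pow_one] using Nat.modEq_iff_dvd.mp h.symm
  simpa using padicNorm.dvd_iff_norm_le.mp hdvd

theorem padicNorm_sub_le_of_mul_eq {x : ℚ} {u v w : ℕ} (hx : x * u = v)
    (hu : u ≡ 1 [MOD p]) (hvw : v ≡ w [MOD p]) : padicNorm p (x - w) ≤ 1 / p := by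
  have hu_unit : padicNorm p u = 1 := by
    rw [padicNorm.nat_eq_one_iff, hu.dvd_iff dvd_rfl]
    exact (Fact.out : p.Prime).not_dvd_one
  have hv : v ≡ w * u [MOD p] := by
    simpa only [mul_one] using hvw.mul hu.symm
  calc padicNorm p (x - w) = padicNorm p ((v : ℚ) - (w * u : ℕ)) := by
        rw [← mul_one (padicNorm p (x - w)), ← hu_unit, ← padicNorm.mul, sub_mul, hx, Nat.cast_mul]
    _ ≤ 1 / p := padicNorm_natCast_sub_natCast_le hv

end Congruence

theorem mPartialBinom_mul_blockPartitionCount (p m a b : ℕ) :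
    mPartialBinom p m (a + b) a *
        (blockPartitionCount (p ^ m) a * blockPartitionCount (p ^ m) b *
          blockPartitionCount (p ^ m) (a % p ^ m + b % p ^ m) : ℕ) =
      ((a % p ^ m + b % p ^ m).choose (a % p ^ m) * blockPartitionCount (p ^ m) (a + b) : ℕ) := by
  have h := add_choose_mul_blockPartitionCount (p ^ m) a b
  have hfactorial : (((a + b) / p ^ m).factorial : ℚ) ≠ 0 := by positivity
  rw [mPartialBinom, mAngle, Nat.add_sub_cancel_left, div_div_eq_mul_div, div_mul_eq_mul_div,
    div_eq_iff hfactorial, mul_comm _ (((a + b) / p ^ m).factorial : ℚ)]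
  exact_mod_cast h

theorem partialBinom_one_mod_p_of_top_general {p k k' : ℕ} (m : ℕ) (hp : p.Prime) (hk : k' ≤ k) :
    padicNorm p (mPartialBinom p m k k' - (k % p ^ m).choose (k' % p ^ m)) ≤ 1 / p := by
  have : Fact p.Prime := ⟨hp⟩
  obtain ⟨b, rfl⟩ := Nat.exists_eq_add_of_le hk
  have hB := blockPartitionCount_pow_modEq_one (p := p) m
  have hchoose := choose_modEq_choose_mod_pow_of_lt (k' % p ^ m + b % p ^ m)
    (Nat.mod_lt k' (pow_pos hp.pos m))
  rw [← Nat.add_mod] at hchoose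
  exact padicNorm_sub_le_of_mul_eq (mPartialBinom_mul_blockPartitionCount p m k' b)
    (((hB _).mul (hB _)).mul (hB _)) (by simpa only [mul_one] using hchoose.mul (hB (k' + b)))

theorem partialBinom_one_mod_p_of_top (p m q k : ℕ) (hp : p.Prime) (hq : 1 ≤ q)
    (hk : k < p ^ m) :
    padicNorm p (mPartialBinom p m (p ^ m * q + k) (p ^ m) - 1) ≤ 1 / p := by
  have hle : p ^ m ≤ p ^ m * q + k := (Nat.le_mul_of_pos_right _ hq).trans (Nat.le_add_right _ _)
  simpa [Nat.mod_eq_of_lt hk] using partialBinom_one_mod_p_of_top_general m hp hle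
end

section
/- Let p be a prime, m a natural number, and let q, t be natural numbers with 0 ≤ t ≤ p^m. Then the level-m partial binomial ⦃p^m·q + t, t⦄ is congruent to 1 modulo p, i.e. the p-adic norm of the rational number C(p^m·q + t, t)/⟨p^m·q + t, t⟩ − 1 is at most 1/p. -/
/-!
If subtracting `k'` from `k` causes no borrow from the quotients by `p ^ m`, then `⟨k, k'⟩` is the
binomial coefficient of those quotients. For `t < p ^ m` it is therefore `1`, and Lucas' theorem
gives `C(p ^ m * q + t, t) ≡ C(t, t) = 1` modulo `p`. For `t = p ^ m` it is `q + 1`, and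
`C((q + 1) * n, n) = (q + 1) * C((q + 1) * n - 1, n - 1)` with `n = p ^ m` brings this back to the
first case, with `t = p ^ m - 1`.
-/

theorem mAngle_eq_choose_div_of_mod_le {p m k k' : ℕ} (hpos : 0 < p ^ m) (hle : k' ≤ k)
    (hmod : k' % p ^ m ≤ k % p ^ m) :
    mAngle p m k k' = Nat.choose (k / p ^ m) (k' / p ^ m) := by
  have hdiv : (k - k') / p ^ m = k / p ^ m - k' / p ^ m := by
    have hsub : k - k' = p ^ m * (k / p ^ m - k' / p ^ m) + (k % p ^ m - k' % p ^ m) := by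
      have hmul : p ^ m * (k' / p ^ m) ≤ p ^ m * (k / p ^ m) := by gcongr
      have hk := Nat.div_add_mod k (p ^ m)
      have hk' := Nat.div_add_mod k' (p ^ m)
      rw [Nat.mul_sub]
      omega
    have hlt : k % p ^ m - k' % p ^ m < p ^ m := (Nat.sub_le _ _).trans_lt (Nat.mod_lt k hpos)
    rw [hsub, Nat.mul_add_div hpos, Nat.div_eq_of_lt hlt, add_zero]
  rw [mAngle, hdiv, Nat.cast_choose ℚ (Nat.div_le_div_right hle)]

theorem mPartialBinom_pow_mul_add_of_lt (p m q t : ℕ) (ht : t < p ^ m) :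
    mPartialBinom p m (p ^ m * q + t) t = Nat.choose (p ^ m * q + t) t := by
  have hangle : mAngle p m (p ^ m * q + t) t = 1 := by
    simp [mAngle_eq_choose_div_of_mod_le ht.pos (Nat.le_add_left t (p ^ m * q)),
      Nat.div_eq_of_lt ht]
  rw [mPartialBinom, hangle, div_one]

theorem mPartialBinom_pow_mul_add_pow (p m q : ℕ) (hp : p ≠ 0) :
    mPartialBinom p m (p ^ m * q + p ^ m) (p ^ m) =
      Nat.choose (p ^ m * q + (p ^ m - 1)) (p ^ m - 1) := by
  have hpos : 0 < p ^ m := Nat.pow_pos hp.bot_lt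
  have hangle : mAngle p m (p ^ m * q + p ^ m) (p ^ m) = q + 1 := by
    simp [mAngle_eq_choose_div_of_mod_le hpos (Nat.le_add_left (p ^ m) (p ^ m * q)),
      Nat.mul_add_div hpos, Nat.div_self hpos]
  have hchoose : Nat.choose (p ^ m * q + p ^ m) (p ^ m) =
      (q + 1) * Nat.choose (p ^ m * q + (p ^ m - 1)) (p ^ m - 1) := by
    rw [mul_comm (p ^ m) q, Nat.choose_mul_add hpos.ne', Nat.add_sub_assoc hpos]
  rw [mPartialBinom, hangle, hchoose, div_eq_iff (by positivity), mul_comm]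
  push_cast
  rfl

theorem exists_mPartialBinom_eq_choose (p m q t : ℕ) (hp : p ≠ 0) (ht : t ≤ p ^ m) :
    ∃ s < p ^ m, mPartialBinom p m (p ^ m * q + t) t = Nat.choose (p ^ m * q + s) s := by
  rcases ht.lt_or_eq with hlt | rfl
  · exact ⟨t, hlt, mPartialBinom_pow_mul_add_of_lt p m q t hlt⟩
  · exact ⟨p ^ m - 1, Nat.sub_one_lt (pow_ne_zero m hp), mPartialBinom_pow_mul_add_pow p m q hp⟩

section Prime

variable {p : ℕ} [Fact p.Prime]

theorem choose_pow_mul_add_modEq_choose (m q r k : ℕ) (hk : k < p ^ m) :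
    Nat.choose (p ^ m * q + r) k ≡ Nat.choose r k [ZMOD p] := by
  have hpos : 0 < p := (Fact.out : p.Prime).pos
  induction m generalizing r k with
  | zero => simp_all [Int.ModEq.refl]
  | succ m ih =>
    have hk_div : k / p < p ^ m := Nat.div_lt_of_lt_mul (by rwa [← pow_succ'])
    calc (Nat.choose (p ^ (m + 1) * q + r) k : ℤ)
        ≡ Nat.choose (r % p) (k % p) * Nat.choose (p ^ m * q + r / p) (k / p) [ZMOD p] := by
          have lucas := Choose.choose_modEq_choose_mod_mul_choose_div
            (n := p ^ (m + 1) * q + r) (k := k) (p := p)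
          rw [pow_succ', mul_assoc] at lucas ⊢
          rwa [Nat.mul_add_mod, Nat.mul_add_div hpos] at lucas
      _ ≡ Nat.choose (r % p) (k % p) * Nat.choose (r / p) (k / p) [ZMOD p] :=
          (ih (r / p) (k / p) hk_div).mul_left _
      _ ≡ Nat.choose r k [ZMOD p] := Choose.choose_modEq_choose_mod_mul_choose_div.symm

theorem intModEq_pow_iff_padicNorm_sub_le {n : ℕ} {a b : ℤ} :
    a ≡ b [ZMOD (p ^ n : ℕ)] ↔ padicNorm p (a - b) ≤ (p : ℚ) ^ (-n : ℤ) := by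
  rw [Int.modEq_comm, Int.modEq_iff_dvd, padicNorm.dvd_iff_norm_le, Int.cast_sub]

end Prime

theorem partialBinom_one_mod_p (p m q t : ℕ) (hp : p.Prime) (ht : t ≤ p ^ m) :
    padicNorm p (mPartialBinom p m (p ^ m * q + t) t - 1) ≤ 1 / p := by
  have : Fact p.Prime := ⟨hp⟩
  obtain ⟨s, hs, hchoose⟩ := exists_mPartialBinom_eq_choose p m q t hp.ne_zero ht
  have hmod : (Nat.choose (p ^ m * q + s) s : ℤ) ≡ 1 [ZMOD (p ^ 1 : ℕ)] := by
    simpa using choose_pow_mul_add_modEq_choose m q s s hs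
  rw [hchoose]
  simpa using intModEq_pow_iff_padicNorm_sub_le.mp hmod
end

section
/- Let p be a prime and m a natural number, and let a, b, c be natural numbers with a + c ≤ p^m. Set N := a + b + c. Then the rational number Γ(a,b,c) satisfies the exact identity Γ(a,b,c) = ⦃N, c⦄ · C(N − c, a), where C denotes the usual binomial coefficient; explicitly, C(N,a)·C(b+c,b)·⟨a+b,a⟩·⟨a+c,a⟩ / (⟨N,a⟩·⟨b+c,b⟩) = C(N,c)·C(N−c,a)/⟨N,c⟩ in ℚ. -/
/-!
The symbols `⟨k, k'⟩` are quotients of factorials and so obey the same trinomial revision as the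
binomial coefficients; hence so do the `⦃k, k'⦄`. With `N = a + b + c`, revising
`⦃N, a⦄·⦃b+c, b⦄` to `⦃N, c⦄·⦃a+b, a⦄` and absorbing `⟨a+b, a⟩` leaves
`Γ(a,b,c) = ⦃N, c⦄·C(a+b, a)·⟨a+c, a⟩`. When `a + c ≤ p^m`, the floors in `⟨a+c, a⟩` are at
most `1`, so this last factor is `1`.
-/

section

variable (p m : ℕ)

theorem mAngle_ne_zero (k k' : ℕ) : mAngle p m k k' ≠ 0 := by
  unfold mAngle
  positivity

theorem mPartialBinom_mul_mAngle (k k' : ℕ) :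
    mPartialBinom p m k k' * mAngle p m k k' = k.choose k' :=
  div_mul_cancel₀ _ (mAngle_ne_zero p m k k')

theorem choose_trinomial_revision (a b c : ℕ) :
    (a + b + c).choose a * (b + c).choose b = (a + b + c).choose c * (a + b).choose a := by
  calc
    (a + b + c).choose a * (b + c).choose b = (a + b + c).choose (a + b) * (a + b).choose a := by
      rw [Nat.choose_mul (Nat.le_add_right a b), Nat.add_assoc, Nat.add_sub_cancel_left,
        Nat.add_sub_cancel_left]
    _ = (a + b + c).choose c * (a + b).choose a := by rw [Nat.choose_symm_add]

theorem mAngle_trinomial_revision (a b c : ℕ) :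
    mAngle p m (a + b + c) a * mAngle p m (b + c) b =
      mAngle p m (a + b + c) c * mAngle p m (a + b) a := by
  have sub_left : a + b + c - a = b + c := by omega
  simp only [mAngle, sub_left, Nat.add_sub_cancel_left, Nat.add_sub_cancel_right]
  field_simp

theorem mPartialBinom_trinomial_revision (a b c : ℕ) :
    mPartialBinom p m (a + b + c) a * mPartialBinom p m (b + c) b =
      mPartialBinom p m (a + b + c) c * mPartialBinom p m (a + b) a := by
  simp only [mPartialBinom, div_mul_div_comm, ← Nat.cast_mul]
  rw [choose_trinomial_revision, mAngle_trinomial_revision]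

theorem gamma_eq_partialBinom_mul_choose_general (a b c : ℕ) :
    mGamma p m a b c =
      mPartialBinom p m (a + b + c) c * ((a + b).choose a : ℚ) * mAngle p m (a + c) a := by
  rw [mGamma, mPartialBinom_trinomial_revision,
    mul_assoc (mPartialBinom p m (a + b + c) c), mPartialBinom_mul_mAngle]

end

theorem factorial_div_eq_one_of_le {n d : ℕ} (h : n ≤ d) : (n / d).factorial = 1 :=
  Nat.factorial_eq_one.mpr (Nat.div_le_of_le_mul (by rwa [mul_one]))

theorem mAngle_eq_one_of_le {p m k k' : ℕ} (hk : k ≤ p ^ m) (hk' : k' ≤ k) :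
    mAngle p m k k' = 1 := by
  simp only [mAngle, factorial_div_eq_one_of_le hk, factorial_div_eq_one_of_le (hk'.trans hk),
    factorial_div_eq_one_of_le ((Nat.sub_le k k').trans hk), Nat.cast_one, mul_one, div_one]

theorem gamma_eq_partialBinom_mul_choose (p m a b c : ℕ) (hp : p.Prime)
    (hac : a + c ≤ p ^ m) :
    mGamma p m a b c =
      mPartialBinom p m (a + b + c) c * (Nat.choose (a + b + c - c) a : ℚ) := by
  rw [gamma_eq_partialBinom_mul_choose_general, Nat.add_sub_cancel,
    mAngle_eq_one_of_le hac (Nat.le_add_right a c), mul_one]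
end

section
/- Let p be a prime, m, q, k natural numbers with 0 ≤ k < p^m, and let a, b, c be natural numbers with a + b + c = p^m·q + k, a + c ≤ p^m, and b ≥ p^m·q. Then Γ(a,b,c) is congruent to Γ(a, b − p^m·q, c) modulo p, i.e. the p-adic norm of the rational number Γ(a,b,c) − Γ(a, b − p^m·q, c) is at most 1/p. -/
/-!
When adding `a`, `b % p ^ m` and `c` produces no carry into the digits of weight `p ^ m`, every
factor `⟨·, ·⟩` in `Γ(a,b,c)` equals `1`, so `Γ(a,b,c)` is the integer `C(a+b+c, a) · C(b+c, c)`.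
By Lucas' theorem, `C(n, j)` modulo `p` depends only on the residue of `n` modulo `p ^ m` as long
as `j < p ^ m`; hence adding a multiple of `p ^ m` to `b` does not change `Γ(a,b,c)` modulo `p`.
-/

theorem div_modEq_div_of_modEq_mul {a b d e : ℕ} (h : a ≡ b [MOD d * e]) :
    a / d ≡ b / d [MOD e] := by
  rw [Nat.ModEq, ← Nat.mod_mul_right_div_self, h, Nat.mod_mul_right_div_self]

theorem sub_div_eq_div_of_le_mod {n k d : ℕ} (h : k ≤ n % d) : (n - k) / d = n / d := by
  refine (Nat.div_le_div_right (Nat.sub_le n k)).antisymm ?_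
  calc
    n / d = (n - n % d) / d := Nat.div_eq_sub_mod_div
    _ ≤ (n - k) / d := Nat.div_le_div_right (Nat.sub_le_sub_left h n)

theorem add_add_mod_of_lt {x b y d : ℕ} (h : x + b % d + y < d) :
    (x + b + y) % d = x + b % d + y := by
  have modEq : x + b % d + y ≡ x + b + y [MOD d] := ((Nat.mod_modEq b d).add_left x).add_right y
  rw [← modEq, Nat.mod_eq_of_lt h]

theorem choose_modEq_choose_of_modEq_pow {p m n n' j : ℕ} [Fact p.Prime]
    (hn : n ≡ n' [MOD p ^ m]) (hj : j < p ^ m) : n.choose j ≡ n'.choose j [MOD p] := by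
  have digit_eq {i : ℕ} (hi : i < m) : n / p ^ i % p = n' / p ^ i % p :=
    div_modEq_div_of_modEq_mul (hn.of_dvd (pow_succ p i ▸ pow_dvd_pow p hi))
  have lucas (x : ℕ) : x.choose j ≡
      (∏ i ∈ Finset.range m, (x / p ^ i % p).choose (j / p ^ i % p) : ℕ) [ZMOD p] := by
    simpa [Nat.div_eq_of_lt hj] using
      Choose.choose_modEq_choose_mul_prod_range_choose (p := p) (n := x) (k := j) m
  rw [← Int.natCast_modEq_iff]
  calc (n.choose j : ℤ)
    _ ≡ (∏ i ∈ Finset.range m, (n / p ^ i % p).choose (j / p ^ i % p) : ℕ) [ZMOD p] := lucas n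
    _ = (∏ i ∈ Finset.range m, (n' / p ^ i % p).choose (j / p ^ i % p) : ℕ) := by
      rw [Finset.prod_congr rfl fun i hi => by rw [digit_eq (Finset.mem_range.mp hi)]]
    _ ≡ n'.choose j [ZMOD p] := (lucas n').symm

theorem padicNorm_natCast_sub_natCast_le_iff_modEq {p n x y : ℕ} [Fact p.Prime] :
    padicNorm p ((x : ℚ) - y) ≤ (p : ℚ) ^ (-n : ℤ) ↔ x ≡ y [MOD p ^ n] := by
  rw [Nat.ModEq.comm, Nat.modEq_iff_dvd, padicNorm.dvd_iff_norm_le]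
  push_cast
  rfl

section PartialBinomial

variable {p m k k' : ℕ}

theorem mAngle_symm (h : k' ≤ k) : mAngle p m k (k - k') = mAngle p m k k' := by
  rw [mAngle, mAngle, Nat.sub_sub_self h, mul_comm]

theorem mPartialBinom_symm (h : k' ≤ k) :
    mPartialBinom p m k (k - k') = mPartialBinom p m k k' := by
  rw [mPartialBinom, mPartialBinom, mAngle_symm h, Nat.choose_symm h]

theorem mAngle_eq_one_of_le_mod (h : k' ≤ k % p ^ m) : mAngle p m k k' = 1 := by
  have hk' : k' / p ^ m = 0 :=
    Nat.eq_zero_of_le_zero ((Nat.div_le_div_right h).trans_eq (Nat.mod_div_self k (p ^ m)))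
  have hsub : (k - k') / p ^ m = k / p ^ m := sub_div_eq_div_of_le_mod h
  rw [mAngle, hk', hsub, Nat.factorial_zero, Nat.cast_one, one_mul,
    div_self (Nat.cast_ne_zero.mpr (Nat.factorial_ne_zero _))]

theorem mPartialBinom_eq_choose_of_le_mod (h : k' ≤ k % p ^ m) :
    mPartialBinom p m k k' = k.choose k' := by
  rw [mPartialBinom, mAngle_eq_one_of_le_mod h, div_one]

end PartialBinomial

theorem mGamma_eq_choose_mul_choose {p m a b c : ℕ} (h : a + b % p ^ m + c < p ^ m) :
    mGamma p m a b c = ((a + b + c).choose a * (b + c).choose c : ℕ) := by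
  have habc : (a + b + c) % p ^ m = a + b % p ^ m + c := add_add_mod_of_lt h
  have hbc : (b + c) % p ^ m = b % p ^ m + c := by
    simpa using add_add_mod_of_lt (x := 0) (b := b) (y := c) (d := p ^ m) (by lia)
  have hab : (a + b) % p ^ m = a + b % p ^ m :=
    add_add_mod_of_lt (x := a) (y := 0) (by lia)
  have hac : (a + c) % p ^ m = a + c := Nat.mod_eq_of_lt (by lia)
  have hbinom : mPartialBinom p m (b + c) b = mPartialBinom p m (b + c) c := by
    simpa using mPartialBinom_symm (p := p) (m := m) (Nat.le_add_left c b)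
  rw [mGamma, hbinom, mPartialBinom_eq_choose_of_le_mod (by lia),
    mPartialBinom_eq_choose_of_le_mod (by lia), mAngle_eq_one_of_le_mod (by lia),
    mAngle_eq_one_of_le_mod (by lia), mul_one, mul_one, Nat.cast_mul]

theorem gamma_sub_gamma_mod_p (p m q k a b c : ℕ) (hp : p.Prime) (hk : k < p ^ m)
    (habc : a + b + c = p ^ m * q + k) (hac : a + c ≤ p ^ m) (hb : p ^ m * q ≤ b) :
    padicNorm p (mGamma p m a b c - mGamma p m a (b - p ^ m * q) c) ≤ 1 / p := by
  have : Fact p.Prime := ⟨hp⟩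
  obtain ⟨b, rfl⟩ := Nat.exists_eq_add_of_le hb
  have hlt : a + b + c < p ^ m := by lia
  have b_mod : b % p ^ m = b := Nat.mod_eq_of_lt (by lia)
  have shift_modEq : p ^ m * q + b ≡ b [MOD p ^ m] := by simp [Nat.ModEq]
  have choose_left : (a + (p ^ m * q + b) + c).choose a ≡ (a + b + c).choose a [MOD p] :=
    choose_modEq_choose_of_modEq_pow ((shift_modEq.add_left a).add_right c) (by lia)
  have choose_right : (p ^ m * q + b + c).choose c ≡ (b + c).choose c [MOD p] :=
    choose_modEq_choose_of_modEq_pow (shift_modEq.add_right c) (by lia)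
  rw [Nat.add_sub_cancel_left, mGamma_eq_choose_mul_choose (by rwa [Nat.mul_add_mod, b_mod]),
    mGamma_eq_choose_mul_choose (by rwa [b_mod]), one_div, ← zpow_neg_one]
  refine (padicNorm_natCast_sub_natCast_le_iff_modEq (n := 1)).mpr ?_
  rw [pow_one]
  exact choose_left.mul choose_right
end

section
/- Let p be a prime, m a natural number, and let q ≥ 1, k, t be natural numbers with 0 ≤ k < t ≤ p^m. Then the p-adic valuation of the binomial coefficient C(p^m·q + k, t) equals the p-adic valuation of q plus the p-adic valuation of the binomial coefficient C(p^m + k, t); that is, padicValNat p (C(p^m·q + k, t)) = padicValNat p q + padicValNat p (C(p^m + k, t)). -/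
/-!
If `k, s < p ^ m` and `p ^ m ∣ n ≠ 0`, then the falling factorial
`(n + k) (n + k - 1) ⋯ (n - s)` contains the factor `n`, and every other factor `n ± j` has
`0 < j < p ^ m`, hence the same `p`-adic valuation `v j` as `j`. So its valuation is
`v (k !) + v n + v (s !)`, in which `n` enters only through `v n`. Dividing by `(k + s + 1)!` and
comparing `n = p ^ m * q` with `n = p ^ m` leaves `v q`.
-/

open scoped Nat

section Perturbation

variable {p m n a b : ℕ}

lemma padicValNat_le_of_pow_dvd_imp (ha : ¬ p ^ m ∣ a) (hb : b ≠ 0)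
    (h : ∀ i ≤ m, p ^ i ∣ a → p ^ i ∣ b) : padicValNat p a ≤ padicValNat p b := by
  have hp : p ≠ 1 := by rintro rfl; simp at ha
  have val_le : padicValNat p a ≤ m :=
    le_of_not_ge fun hm ↦ ha ((pow_dvd_pow p hm).trans pow_padicValNat_dvd)
  exact (padicValNat_dvd_iff_le_of_ne_one hp hb).1 (h _ val_le pow_padicValNat_dvd)

lemma padicValNat_eq_of_pow_dvd_iff (hb : ¬ p ^ m ∣ b)
    (h : ∀ i ≤ m, p ^ i ∣ a ↔ p ^ i ∣ b) : padicValNat p a = padicValNat p b := by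
  have ha : ¬ p ^ m ∣ a := mt (h m le_rfl).1 hb
  have ha₀ : a ≠ 0 := by rintro rfl; simp at ha
  have hb₀ : b ≠ 0 := by rintro rfl; simp at hb
  exact le_antisymm (padicValNat_le_of_pow_dvd_imp ha hb₀ fun i hi ↦ (h i hi).1)
    (padicValNat_le_of_pow_dvd_imp hb ha₀ fun i hi ↦ (h i hi).2)

lemma padicValNat_add_of_pow_dvd_left (hn : p ^ m ∣ n) (hb : ¬ p ^ m ∣ b) :
    padicValNat p (n + b) = padicValNat p b :=
  padicValNat_eq_of_pow_dvd_iff hb fun _ hi ↦ Nat.dvd_add_right ((pow_dvd_pow p hi).trans hn)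

lemma padicValNat_sub_of_pow_dvd_left (hn : p ^ m ∣ n) (hb : ¬ p ^ m ∣ b) (hbn : b ≤ n) :
    padicValNat p (n - b) = padicValNat p b :=
  padicValNat_eq_of_pow_dvd_iff hb fun _ hi ↦
    Nat.dvd_sub_iff_right hbn ((pow_dvd_pow p hi).trans hn)

end Perturbation

lemma descFactorial_add_succ_eq_mul (n k s : ℕ) :
    (n + k).descFactorial (k + (s + 1)) =
      (n + 1).ascFactorial k * (n * (n - 1).descFactorial s) := by
  have pull_out_n : n.descFactorial (s + 1) = n * (n - 1).descFactorial s := by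
    cases n with
    | zero => simp
    | succ n => exact Nat.succ_descFactorial_succ n s
  rw [← Nat.descFactorial_mul_descFactorial (Nat.le_add_right k (s + 1)), Nat.add_sub_cancel,
    Nat.add_sub_cancel_left, Nat.add_descFactorial_eq_ascFactorial, pull_out_n, mul_comm]

section Factorial

variable {p m n k s : ℕ} [Fact p.Prime]

lemma padicValNat_succ_ascFactorial_of_pow_dvd (hn : p ^ m ∣ n) (hk : k < p ^ m) :
    padicValNat p ((n + 1).ascFactorial k) = padicValNat p k ! := by
  induction k with
  | zero => simp
  | succ k ih =>
    have factor : padicValNat p (n + (k + 1)) = padicValNat p (k + 1) :=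
      padicValNat_add_of_pow_dvd_left hn (Nat.not_dvd_of_pos_of_lt k.succ_pos hk)
    rw [Nat.ascFactorial_succ, Nat.factorial_succ,
      padicValNat.mul (by lia) (Nat.ascFactorial_pos n k).ne',
      padicValNat.mul k.succ_ne_zero k.factorial_ne_zero, ih (by lia), add_assoc n, add_comm 1,
      factor]

lemma padicValNat_pred_descFactorial_of_pow_dvd (hn₀ : n ≠ 0) (hn : p ^ m ∣ n)
    (hs : s < p ^ m) : padicValNat p ((n - 1).descFactorial s) = padicValNat p s ! := by
  have hmn : p ^ m ≤ n := Nat.le_of_dvd (Nat.pos_of_ne_zero hn₀) hn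
  induction s with
  | zero => simp
  | succ s ih =>
    have factor : padicValNat p (n - (s + 1)) = padicValNat p (s + 1) :=
      padicValNat_sub_of_pow_dvd_left hn (Nat.not_dvd_of_pos_of_lt s.succ_pos hs) (by lia)
    have rest_ne_zero : (n - 1).descFactorial s ≠ 0 := by
      rw [Ne, Nat.descFactorial_eq_zero_iff_lt]; lia
    rw [Nat.descFactorial_succ, Nat.factorial_succ, padicValNat.mul (by lia) rest_ne_zero,
      padicValNat.mul s.succ_ne_zero s.factorial_ne_zero, ih (by lia), Nat.sub_sub, add_comm 1,
      factor]

lemma padicValNat_descFactorial_of_pow_dvd (hn₀ : n ≠ 0) (hn : p ^ m ∣ n) (hk : k < p ^ m)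
    (hs : s < p ^ m) :
    padicValNat p ((n + k).descFactorial (k + (s + 1))) =
      padicValNat p k ! + (padicValNat p n + padicValNat p s !) := by
  have hmn : p ^ m ≤ n := Nat.le_of_dvd (Nat.pos_of_ne_zero hn₀) hn
  have lower_ne_zero : (n - 1).descFactorial s ≠ 0 := by
    rw [Ne, Nat.descFactorial_eq_zero_iff_lt]; lia
  rw [descFactorial_add_succ_eq_mul,
    padicValNat.mul (Nat.ascFactorial_pos n k).ne' (mul_ne_zero hn₀ lower_ne_zero),
    padicValNat.mul hn₀ lower_ne_zero, padicValNat_succ_ascFactorial_of_pow_dvd hn hk,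
    padicValNat_pred_descFactorial_of_pow_dvd hn₀ hn hs]

lemma padicValNat_factorial_add_choose_of_pow_dvd (hn₀ : n ≠ 0) (hn : p ^ m ∣ n)
    (hk : k < p ^ m) (hs : s < p ^ m) :
    padicValNat p (k + (s + 1))! + padicValNat p ((n + k).choose (k + (s + 1))) =
      padicValNat p k ! + (padicValNat p n + padicValNat p s !) := by
  have hmn : p ^ m ≤ n := Nat.le_of_dvd (Nat.pos_of_ne_zero hn₀) hn
  rw [← padicValNat_descFactorial_of_pow_dvd hn₀ hn hk hs,
    Nat.descFactorial_eq_factorial_mul_choose,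
    padicValNat.mul (Nat.factorial_ne_zero _) (Nat.choose_ne_zero (by lia))]

end Factorial

theorem padicValNat_choose_eq_general (p m q k t : ℕ) (hp : p.Prime) (hq : 1 ≤ q)
    (hk : k < p ^ m) (hkt : k < t) (ht : t ≤ p ^ m + k) :
    padicValNat p (Nat.choose (p ^ m * q + k) t) =
      padicValNat p q + padicValNat p (Nat.choose (p ^ m + k) t) := by
  have : Fact p.Prime := ⟨hp⟩
  obtain ⟨s, rfl⟩ : ∃ s, t = k + (s + 1) := Nat.exists_eq_add_of_lt hkt
  have hs : s < p ^ m := by lia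
  have hq₀ : q ≠ 0 := Nat.one_le_iff_ne_zero.1 hq
  have hpm : p ^ m ≠ 0 := pow_ne_zero m hp.ne_zero
  have at_mul := padicValNat_factorial_add_choose_of_pow_dvd (mul_ne_zero hpm hq₀)
    (dvd_mul_right (p ^ m) q) hk hs
  have at_pow := padicValNat_factorial_add_choose_of_pow_dvd hpm dvd_rfl hk hs
  rw [padicValNat.mul hpm hq₀] at at_mul
  lia

theorem padicValNat_choose_eq (p m q k t : ℕ) (hp : p.Prime) (hq : 1 ≤ q)
    (hkt : k < t) (ht : t ≤ p ^ m) :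
    padicValNat p (Nat.choose (p ^ m * q + k) t) =
      padicValNat p q + padicValNat p (Nat.choose (p ^ m + k) t) :=
  padicValNat_choose_eq_general p m q k t hp hq (hkt.trans_le ht) hkt (ht.trans le_self_add)
end

section
/- Let p be a prime, m a natural number, and let q ≥ 1, k, t be natural numbers with 0 ≤ k < t ≤ p^m. Then (p − 1) · (padicValNat p (C(p^m·q + k, t)) − padicValNat p q) = S_p(t) + S_p(p^m + k − t) − S_p(k) − 1, where S_p(n) denotes the sum of the digits of n in base p. -/
/-!
By Kummer's theorem, `(p - 1) * v_p (C(x + y, y)) = S_p y + S_p x - S_p (x + y)`. Write `q = a + 1`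
and `s = p ^ m + k - t`. As `k < t ≤ p ^ m`, both `k` and `s` are below `p ^ m`, so
`p ^ m * q + k` has the digits of `k` below those of `q`, and `(p ^ m * q + k) - t = p ^ m * a + s`
has the digits of `s` below those of `a`, the borrow having turned `q` into `a`. The digit sums of
`q` and `a` are in turn related by Kummer's theorem for `C(a + 1, 1) = q`, which is where `v_p q`
comes from.
-/

theorem sum_digits_pow_mul_add {b m r : ℕ} (hb : 1 < b) (hr : r < b ^ m) (a : ℕ) :
    (Nat.digits b (b ^ m * a + r)).sum = (Nat.digits b a).sum + (Nat.digits b r).sum := by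
  rcases a.eq_zero_or_pos with rfl | ha
  · simp
  obtain ⟨k, rfl⟩ := Nat.exists_eq_add_of_le ((Nat.digits_length_le_iff hb r).mpr hr)
  rw [add_comm, ← Nat.digits_append_zeroes_append_digits hb ha]
  simp [add_comm]

section Kummer

variable {p : ℕ} [Fact p.Prime]

theorem sub_one_mul_padicValNat_factorial_add_sum_digits (n : ℕ) :
    (p - 1) * padicValNat p n.factorial + (Nat.digits p n).sum = n := by
  rw [sub_one_mul_padicValNat_factorial, Nat.sub_add_cancel (Nat.digit_sum_le p n)]

theorem padicValNat_factorial_add (n k : ℕ) :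
    padicValNat p (n + k).factorial =
      padicValNat p ((n + k).choose k) + padicValNat p n.factorial +
        padicValNat p k.factorial := by
  have choose_ne_zero : (n + k).choose k ≠ 0 := Nat.choose_ne_zero (Nat.le_add_left k n)
  rw [← Nat.add_choose_mul_factorial_mul_factorial n k,
    padicValNat.mul (mul_ne_zero choose_ne_zero n.factorial_ne_zero) k.factorial_ne_zero,
    padicValNat.mul choose_ne_zero n.factorial_ne_zero]

-- Stated additively because the truncated subtraction in Mathlib, as in
-- `sub_one_mul_padicValNat_choose_eq_sub_sum_digits`, does not transfer to `ℤ`.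
theorem sub_one_mul_padicValNat_choose_add_sum_digits (n k : ℕ) :
    (p - 1) * padicValNat p ((n + k).choose k) + (Nat.digits p (n + k)).sum =
      (Nat.digits p k).sum + (Nat.digits p n).sum := by
  have legendre := sub_one_mul_padicValNat_factorial_add_sum_digits (p := p)
  have legendre_add := legendre (n + k)
  rw [padicValNat_factorial_add, mul_add, mul_add] at legendre_add
  linarith [legendre n, legendre k]

theorem sub_one_mul_padicValNat_succ_add_sum_digits (n : ℕ) :
    (p - 1) * padicValNat p (n + 1) + (Nat.digits p (n + 1)).sum = (Nat.digits p n).sum + 1 := by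
  have digits_one : Nat.digits p 1 = [1] :=
    Nat.digits_of_lt p 1 one_ne_zero (Fact.out : p.Prime).one_lt
  have kummer := sub_one_mul_padicValNat_choose_add_sum_digits (p := p) n 1
  rwa [Nat.choose_one_right, digits_one, List.sum_singleton, add_comm 1] at kummer

end Kummer

theorem padicValNat_choose_digit_sum (p m q k t : ℕ) (hp : p.Prime) (hq : 1 ≤ q)
    (hkt : k < t) (ht : t ≤ p ^ m) :
    ((p : ℤ) - 1) *
        ((padicValNat p (Nat.choose (p ^ m * q + k) t) : ℤ) - (padicValNat p q : ℤ)) =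
      ((Nat.digits p t).sum : ℤ) + ((Nat.digits p (p ^ m + k - t)).sum : ℤ) -
        ((Nat.digits p k).sum : ℤ) - 1 := by
  have : Fact p.Prime := ⟨hp⟩
  obtain ⟨a, rfl⟩ := Nat.exists_eq_add_of_le' hq
  set s := p ^ m + k - t
  have top_eq : p ^ m * a + s + t = p ^ m * (a + 1) + k := by rw [mul_add_one]; lia
  have top_digits := sum_digits_pow_mul_add hp.one_lt (hkt.trans_le ht) (a + 1)
  have diff_digits := sum_digits_pow_mul_add hp.one_lt (show s < p ^ m by lia) a
  have kummer := sub_one_mul_padicValNat_choose_add_sum_digits (p := p) (p ^ m * a + s) t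
  have kummer_succ := sub_one_mul_padicValNat_succ_add_sum_digits (p := p) a
  rw [top_eq, top_digits, diff_digits] at kummer
  rw [← Nat.cast_pred hp.pos, mul_sub]
  lia
end
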